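/- arXiv:1508.07206 — 2 statements merged into one kernel-verified Lean document; each statement's English description precedes it below -/
import Mathlib

section
/- Let ℓ be an odd prime, k a positive integer, and D an integer that is a quadratic nonresidue modulo ℓ. Let R_k = (ℤ/ℓᵏℤ)[X]/(X² − D) and let 𝒜ᵗ_{ℓᵏ,I} = {σ ∈ GL₂(R_k) | det σ lies in the image of (ℤ/ℓᵏℤ)^× and tr σ lies in the image of ℤ/ℓᵏℤ}. Then #𝒜ᵗ_{ℓᵏ,I} = ((ℓ−1)/(ℓ+1))·ℓ^{6k−2}·(ℓ² + ℓ + 1 − ℓ^{−2k}), i.e. (ℓ+1)·#𝒜ᵗ_{ℓᵏ,I} = (ℓ−1)·ℓ^{6k−2}·(ℓ² + ℓ + 1) − (ℓ−1)·ℓ^{4k−2}. -/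
open Matrix Polynomial

/-- The ring `R_k = (ℤ/ℓᵏℤ)[X]/(X² − D)`. -/
abbrev InertRing (ℓ k : ℕ) (D : ℤ) : Type :=
  AdjoinRoot ((X : Polynomial (ZMod (ℓ ^ k))) ^ 2 - C (D : ZMod (ℓ ^ k)))

/-!
Write `σ = t + τ` with `t` a scalar and `τ` traceless, so that `tr σ = 2t` and
`det σ = t² + det τ`. For a matrix counted by the theorem, `t` and `det τ` lie in `A = ℤ/ℓᵏℤ`.

* Multiplication by `√d` permutes the traceless matrices `τ` with `det τ ∈ A`, and it multiplies
  `det τ` by the nonsquare unit `d`. A quadratic character computation in the residue field shows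
  that `t² - m` and `t² - d m` are units for `2 #Aˣ` values of `t` altogether, so on average each
  `τ` extends to `#Aˣ` invertible matrices `t + τ`.
* The `√d`-coordinate of `det τ` is a hyperbolic form, so these `τ` correspond to the pairs of
  orthogonal vectors `(x, y)` in `A³ × A³`. If `x` has a unit coordinate, its orthogonal complement
  has `#A²` elements. Otherwise the maximal ideal `(π)` contains all coordinates of `x`, and as
  `(π) ≅ A / ann π` these pairs come from orthogonal pairs over the smaller ring `A / ann π`.
-/

section Counting

lemma card_preimage_mul_card {G H : Type*} [AddGroup G] [AddGroup H] (f : G →+ H)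
    (hf : Function.Surjective f) (S : Set H) :
    Nat.card (f ⁻¹' S) * Nat.card H = Nat.card S * Nat.card G := by
  let e : G ≃ H × f.ker := (Equiv.sigmaFiberEquiv f).symm.trans
    (Equiv.sigmaEquivProdOfEquiv fun h => AddMonoidHom.fiberEquivKerOfSurjective hf h)
  have hS : f ⁻¹' S = e ⁻¹' (S ×ˢ Set.univ) :=
    Set.ext fun g => (and_iff_left (Set.mem_univ (e g).2)).symm
  have hcard : Nat.card (f ⁻¹' S) = Nat.card S * Nat.card f.ker := by
    rw [hS, Nat.card_coe_set_eq,
      Set.ncard_preimage_of_injective_subset_range e.injective (by simp), Set.ncard_prod,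
      Set.ncard_univ, Nat.card_coe_set_eq]
  rw [hcard, Nat.card_congr e, Nat.card_prod]
  ring

lemma card_setOf_prod {α β : Type*} [Fintype α] [Finite β] (P : α → β → Prop) :
    Nat.card {p : α × β | P p.1 p.2} = ∑ a, Nat.card {b | P a b} :=
  (Nat.card_congr (Equiv.subtypeProdEquivSigmaSubtype P)).trans Nat.card_sigma

end Counting

section OrthogonalPairs

/-- The pairs of vectors in `ι → A` with vanishing standard bilinear pairing. -/
def orthogonalPairs (ι A : Type*) [Fintype ι] [CommRing A] : Set ((ι → A) × (ι → A)) :=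
  {p | p.1 ⬝ᵥ p.2 = 0}

variable {ι A : Type*} [Fintype ι] [CommRing A]

lemma card_orthogonal_of_isUnit {x : ι → A} {i : ι} (hx : IsUnit (x i)) :
    Nat.card {y | x ⬝ᵥ y = 0} * Nat.card A = Nat.card A ^ Fintype.card ι := by
  classical
  let f : (ι → A) →+ A := (dotProductBilin A A x).toAddMonoidHom
  have hf : Function.Surjective f := by
    obtain ⟨u, hu⟩ := hx
    intro a
    exact ⟨Pi.single i (↑u⁻¹ * a), by simp [f, ← hu]⟩
  have hker : f ⁻¹' {0} = {y | x ⬝ᵥ y = 0} := rfl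
  have h := card_preimage_mul_card f hf {0}
  rwa [hker, Nat.card_fun, Nat.card_eq_fintype_card (α := ι), Nat.card_coe_set_eq {0},
    Set.ncard_singleton, one_mul] at h

lemma card_orthogonalPairs_of_subsingleton [Subsingleton A] :
    Nat.card (orthogonalPairs ι A) = 1 := by
  have : Nonempty (orthogonalPairs ι A) := ⟨0, Subsingleton.elim _ _⟩
  exact Nat.card_unique

variable [Finite A]

lemma card_orthogonalPairs_isUnit :
    Nat.card {p ∈ orthogonalPairs ι A | ∃ i, IsUnit (p.1 i)} * Nat.card A =
      Nat.card {x : ι → A | ∃ i, IsUnit (x i)} * Nat.card A ^ Fintype.card ι := by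
  classical
  have := Fintype.ofFinite A
  have hfiber (x : ι → A) : Nat.card {y | x ⬝ᵥ y = 0 ∧ ∃ i, IsUnit (x i)} * Nat.card A =
      if ∃ i, IsUnit (x i) then Nat.card A ^ Fintype.card ι else 0 := by
    split_ifs with hx
    · obtain ⟨i, hi⟩ := hx
      simpa only [show ∃ i, IsUnit (x i) from ⟨i, hi⟩, and_true] using card_orthogonal_of_isUnit hi
    · simp [hx]
  have hsum := card_setOf_prod fun x y : ι → A => x ⬝ᵥ y = 0 ∧ ∃ i, IsUnit (x i)
  calc
    _ = ∑ x : ι → A, if ∃ i, IsUnit (x i) then Nat.card A ^ Fintype.card ι else 0 := by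
      rw [← Finset.sum_congr rfl fun x _ => hfiber x, ← Finset.sum_mul, ← hsum]
      rfl
    _ = _ := by
      rw [← Finset.sum_filter, Finset.sum_const, smul_eq_mul, ← Fintype.card_subtype,
        ← Nat.card_eq_fintype_card]
      rfl

open IsLocalRing

section Recursion

variable [IsLocalRing A]

omit [Fintype ι] [Finite A] in
lemma not_exists_isUnit_iff {x : ι → A} :
    (¬ ∃ i, IsUnit (x i)) ↔ ∀ i, x i ∈ maximalIdeal A := by
  simp [mem_maximalIdeal]

lemma card_exists_isUnit_add_card_maximalIdeal_pow :
    Nat.card {x : ι → A | ∃ i, IsUnit (x i)} + Nat.card (maximalIdeal A) ^ Fintype.card ι =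
      Nat.card A ^ Fintype.card ι := by
  have hcompl : {x : ι → A | ∃ i, IsUnit (x i)}ᶜ = {x : ι → A | ∀ i, x i ∈ maximalIdeal A} :=
    Set.ext fun _ => not_exists_isUnit_iff
  have hpi : Nat.card {x : ι → A | ∀ i, x i ∈ maximalIdeal A} =
      Nat.card (maximalIdeal A) ^ Fintype.card ι := by
    rw [← Nat.card_eq_fintype_card (α := ι), ← Nat.card_fun]
    exact Nat.card_congr (Equiv.subtypePiEquivPi (p := fun _ a => a ∈ maximalIdeal A))
  have h := Set.ncard_add_ncard_compl {x : ι → A | ∃ i, IsUnit (x i)}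
  rwa [hcompl, ← Nat.card_coe_set_eq, ← Nat.card_coe_set_eq, hpi, Nat.card_fun,
    Nat.card_eq_fintype_card (α := ι)] at h

variable {B : Type*} [CommRing B] [Algebra A B]

lemma card_orthogonalPairs_not_isUnit (hB : Function.Surjective (algebraMap A B))
    {ψ : B →ₗ[A] A} (hψ : Function.Injective ψ) (hrange : ψ.range = maximalIdeal A) :
    Nat.card {p ∈ orthogonalPairs ι A | ¬ ∃ i, IsUnit (p.1 i)} * Nat.card B ^ Fintype.card ι =
      Nat.card (orthogonalPairs ι B) * Nat.card A ^ Fintype.card ι := by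
  have := Finite.of_surjective _ hB
  let Φ : (ι → B) × (ι → A) → (ι → A) × (ι → A) := fun p => (ψ ∘ p.1, p.2)
  let φ : (ι → B) × (ι → A) →+ (ι → B) × (ι → B) :=
    (AddMonoidHom.id _).prodMap ((algebraMap A B).toAddMonoidHom.compLeft ι)
  have hφ : Function.Surjective φ := Function.surjective_id.prodMap hB.comp_left
  have hΦ : Function.Injective Φ := hψ.comp_left.prodMap Function.injective_id
  have hdot (z : ι → B) (y : ι → A) : (ψ ∘ z) ⬝ᵥ y = ψ (z ⬝ᵥ (algebraMap A B ∘ y)) := by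
    simp only [dotProduct, Function.comp_apply, map_sum]
    refine Finset.sum_congr rfl fun i _ => ?_
    rw [mul_comm (z i), ← Algebra.smul_def, map_smul, smul_eq_mul, mul_comm]
  have himage : Φ '' (φ ⁻¹' orthogonalPairs ι B) =
      {p ∈ orthogonalPairs ι A | ¬ ∃ i, IsUnit (p.1 i)} := by
    ext ⟨x, y⟩
    simp only [Set.mem_image, Set.mem_ofPred_eq, not_exists_isUnit_iff]
    constructor
    · rintro ⟨⟨z, w⟩, hzw, h⟩
      obtain ⟨rfl, rfl⟩ := Prod.mk.inj h
      refine ⟨?_, fun i => hrange ▸ ⟨z i, rfl⟩⟩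
      exact (hdot z w).trans ((congrArg ψ hzw).trans (map_zero ψ))
    · rintro ⟨hxy, hx⟩
      choose z hz using fun i => hrange.symm ▸ hx i
      obtain rfl : ψ ∘ z = x := funext hz
      exact ⟨(z, y), hψ ((hdot z y).symm.trans (hxy.trans (map_zero ψ).symm)), rfl⟩
  have h := card_preimage_mul_card φ hφ (orthogonalPairs ι B)
  rw [Nat.card_prod, Nat.card_prod, Nat.card_fun, Nat.card_fun, Nat.card_eq_fintype_card (α := ι)]
    at h
  rw [← himage, Nat.card_image_of_injective hΦ]
  refine mul_right_cancel₀ (pow_ne_zero (Fintype.card ι) (Nat.card_pos (α := B)).ne') ?_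
  linear_combination h

omit [Finite A] in
lemma card_eq_card_residueField_mul_card {ψ : B →ₗ[A] A} (hψ : Function.Injective ψ)
    (hrange : ψ.range = maximalIdeal A) :
    Nat.card A = Nat.card (ResidueField A) * Nat.card B := by
  have hm : Nat.card (maximalIdeal A) = Nat.card B := hrange ▸ Nat.card_range_of_injective hψ
  exact hm ▸ (maximalIdeal A).toAddSubgroup.card_eq_card_quotient_mul_card_addSubgroup

lemma card_orthogonalPairs_step (hB : Function.Surjective (algebraMap A B))
    {ψ : B →ₗ[A] A} (hψ : Function.Injective ψ) (hrange : ψ.range = maximalIdeal A) :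
    Nat.card A * Nat.card (orthogonalPairs ι A) + (Nat.card A * Nat.card B) ^ Fintype.card ι =
      Nat.card A ^ (2 * Fintype.card ι) + Nat.card A * Nat.card (ResidueField A) ^ Fintype.card ι *
        Nat.card (orthogonalPairs ι B) := by
  have := Finite.of_surjective _ hB
  have hm : Nat.card (maximalIdeal A) = Nat.card B :=
    hrange ▸ Nat.card_range_of_injective hψ
  have hAB := card_eq_card_residueField_mul_card hψ hrange
  have hsplit : Nat.card {p ∈ orthogonalPairs ι A | ∃ i, IsUnit (p.1 i)} +
      Nat.card {p ∈ orthogonalPairs ι A | ¬ ∃ i, IsUnit (p.1 i)} =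
      Nat.card (orthogonalPairs ι A) :=
    Set.ncard_inter_add_ncard_sdiff_eq_ncard (orthogonalPairs ι A) {p | ∃ i, IsUnit (p.1 i)}
  have hnonunit : Nat.card {p ∈ orthogonalPairs ι A | ¬ ∃ i, IsUnit (p.1 i)} =
      Nat.card (orthogonalPairs ι B) * Nat.card (ResidueField A) ^ Fintype.card ι := by
    refine mul_right_cancel₀ (pow_ne_zero (Fintype.card ι) (Nat.card_pos (α := B)).ne') ?_
    rw [card_orthogonalPairs_not_isUnit hB hψ hrange, hAB]
    ring
  have hunit := card_orthogonalPairs_isUnit (ι := ι) (A := A)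
  have hcount := card_exists_isUnit_add_card_maximalIdeal_pow (ι := ι) (A := A)
  rw [hm] at hcount
  rw [← hsplit, hnonunit, mul_pow, pow_mul', sq]
  linear_combination hunit + Nat.card A ^ Fintype.card ι * hcount

end Recursion

lemma exists_injective_range_eq_span_singleton {A : Type*} [CommRing A] (π : A) :
    ∃ ψ : (A ⧸ Ideal.torsionOf A A π) →ₗ[A] A,
      Function.Injective ψ ∧ ψ.range = A ∙ π := by
  let e := Ideal.quotTorsionOfEquivSpanSingleton A A π
  refine ⟨Submodule.subtype _ ∘ₗ e.toLinearMap,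
    (Submodule.subtype_injective _).comp e.injective, ?_⟩
  rw [LinearMap.range_comp_of_range_eq_top _ e.range, Submodule.range_subtype]

omit [Finite A] in
lemma card_residueField_eq_of_surjective [IsLocalRing A] {K : Type*} [Field K] (f : A →+* K)
    (hf : Function.Surjective f) : Nat.card (ResidueField A) = Nat.card K := by
  have := hf.isLocalHom
  exact Nat.card_congr (Equiv.ofBijective (ResidueField.lift f)
    ⟨RingHom.injective _, fun k => (hf k).imp' (residue A) fun _ h => h⟩)

theorem card_orthogonalPairs [IsLocalRing A] [IsPrincipalIdealRing A] :
    ((Nat.card (ResidueField A) : ℤ) ^ Fintype.card ι - Nat.card (ResidueField A)) *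
        Nat.card A * Nat.card (orthogonalPairs ι A) =
      (Nat.card (ResidueField A) ^ Fintype.card ι - 1) * Nat.card A ^ (2 * Fintype.card ι) -
        (Nat.card (ResidueField A) - 1) * Nat.card A ^ (Fintype.card ι + 1) := by
  induction hn : Nat.card A using Nat.strong_induction_on generalizing A with
  | _ n ih =>
  subst hn
  obtain ⟨π, hπ⟩ := IsPrincipalIdealRing.principal (maximalIdeal A)
  obtain ⟨ψ, hψ, hrange⟩ := exists_injective_range_eq_span_singleton π
  rw [← hπ] at hrange
  set B := A ⧸ Ideal.torsionOf A A π
  have hB : Function.Surjective (algebraMap A B) := Ideal.Quotient.mk_surjective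
  have := Finite.of_surjective _ hB
  have hAB := card_eq_card_residueField_mul_card hψ hrange
  have hquot : ((Nat.card (ResidueField A) : ℤ) ^ Fintype.card ι - Nat.card (ResidueField A)) *
        Nat.card B * Nat.card (orthogonalPairs ι B) =
      (Nat.card (ResidueField A) ^ Fintype.card ι - 1) * Nat.card B ^ (2 * Fintype.card ι) -
        (Nat.card (ResidueField A) - 1) * Nat.card B ^ (Fintype.card ι + 1) := by
    obtain hsub | hnontrivial := subsingleton_or_nontrivial B
    · rw [card_orthogonalPairs_of_subsingleton, Nat.card_unique (α := B)]
      push_cast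
      ring
    · have := IsLocalRing.of_surjective' _ hB
      have := IsPrincipalIdealRing.of_surjective _ hB
      have := Finite.of_surjective _ (residue_surjective (R := A))
      have hlt : Nat.card B < Nat.card A := by
        rw [hAB]
        exact lt_mul_of_one_lt_left Nat.card_pos Finite.one_lt_card
      rw [card_residueField_eq_of_surjective ((residue B).comp (algebraMap A B))
        (residue_surjective.comp hB)]
      exact ih _ hlt rfl
  have hstep : (Nat.card A * Nat.card (orthogonalPairs ι A) +
      (Nat.card A * Nat.card B) ^ Fintype.card ι : ℤ) = Nat.card A ^ (2 * Fintype.card ι) +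
        Nat.card A * Nat.card (ResidueField A) ^ Fintype.card ι * Nat.card (orthogonalPairs ι B) :=
    mod_cast card_orthogonalPairs_step hB hψ hrange
  rw [hAB] at hstep ⊢
  push_cast at hstep ⊢
  linear_combination ((Nat.card (ResidueField A) : ℤ) ^ Fintype.card ι -
    Nat.card (ResidueField A)) * hstep +
      Nat.card (ResidueField A) ^ (Fintype.card ι + 1) * hquot

end OrthogonalPairs

section Squares

open IsLocalRing

lemma card_sq_ne_add_card_sq_ne {F : Type*} [Field F] [Finite F] (h2 : (2 : F) ≠ 0) {d : F}
    (hd : ¬ IsSquare d) (m : F) :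
    Nat.card {t : F | t ^ 2 ≠ m} + Nat.card {t : F | t ^ 2 ≠ d * m} = 2 * Nat.card Fˣ := by
  classical
  have := Fintype.ofFinite F
  have hchar : ringChar F ≠ 2 := fun h =>
    h2 (by exact_mod_cast h ▸ ringChar.Nat.cast_ringChar (R := F))
  have hcard (a : F) :
      (Nat.card {t : F | t ^ 2 ≠ a} : ℤ) = Nat.card F - 1 - quadraticChar F a := by
    have hroots := quadraticChar_card_sqrts hchar a
    have hcompl := Set.ncard_add_ncard_compl {t : F | t ^ 2 = a}
    rw [← Set.ncard_eq_toFinset_card'] at hroots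
    rw [show {t : F | t ^ 2 ≠ a} = {t : F | t ^ 2 = a}ᶜ from rfl, Nat.card_coe_set_eq]
    lia
  have hm := hcard m
  have hdm := hcard (d * m)
  rw [map_mul, quadraticChar_neg_one_iff_not_isSquare.2 hd] at hdm
  have hunits := Nat.card_units F
  have hpos : 0 < Nat.card F := Nat.card_pos
  lia

variable {A : Type*} [CommRing A] [IsLocalRing A]

lemma card_preimage_residue (S : Set (ResidueField A)) :
    Nat.card (residue A ⁻¹' S) * Nat.card (ResidueField A) = Nat.card S * Nat.card A :=
  card_preimage_mul_card (residue A).toAddMonoidHom residue_surjective S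

lemma card_units_mul_card_residueField :
    Nat.card Aˣ * Nat.card (ResidueField A) = Nat.card (ResidueField A)ˣ * Nat.card A := by
  have hrange : Set.range ((↑) : Aˣ → A) =
      residue A ⁻¹' Set.range ((↑) : (ResidueField A)ˣ → ResidueField A) :=
    Set.ext fun _ => (isUnit_map_iff (residue A) _).symm
  rw [← Nat.card_range_of_injective Units.val_injective, hrange, card_preimage_residue,
    Nat.card_range_of_injective Units.val_injective]

lemma card_isUnit_sq_sub_add_card_isUnit_sq_sub [Finite A] (h2 : IsUnit (2 : A)) {d : A}
    (hd : ¬ IsSquare (residue A d)) (m : A) :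
    Nat.card {t : A | IsUnit (t ^ 2 - m)} + Nat.card {t : A | IsUnit (t ^ 2 - d * m)} =
      2 * Nat.card Aˣ := by
  have := Finite.of_surjective _ (residue_surjective (R := A))
  have hpreimage (a : A) : {t : A | IsUnit (t ^ 2 - a)} =
      residue A ⁻¹' {t | t ^ 2 ≠ residue A a} := by
    ext t
    rw [Set.mem_ofPred_eq, ← residue_ne_zero_iff_isUnit, map_sub, map_pow, sub_ne_zero]
    rfl
  have hfield := card_sq_ne_add_card_sq_ne
    (map_ofNat (residue A) 2 ▸ (residue_ne_zero_iff_isUnit 2).2 h2) hd (residue A m)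
  rw [← map_mul] at hfield
  refine mul_right_cancel₀ (Nat.card_pos (α := ResidueField A)).ne' ?_
  rw [add_mul, hpreimage, hpreimage, card_preimage_residue, card_preimage_residue, ← add_mul,
    hfield, mul_assoc, mul_assoc, card_units_mul_card_residueField]

-- `f` exchanges the values `m` and `d * m`, so the number of `t` is `#Aˣ` on average over `V`.
lemma card_isUnit_sq_sub_apply [Finite A] (h2 : IsUnit (2 : A)) {d : A}
    (hd : ¬ IsSquare (residue A d)) {V : Type*} [Finite V] (Q : V → A) {f : V → V}
    (hf : Function.Injective f) (hQ : ∀ v, Q (f v) = d * Q v) :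
    Nat.card {p : V × A | IsUnit (p.2 ^ 2 - Q p.1)} = Nat.card V * Nat.card Aˣ := by
  have := Fintype.ofFinite V
  have hdouble : ∑ v, Nat.card {t | IsUnit (t ^ 2 - Q v)} +
      ∑ v, Nat.card {t | IsUnit (t ^ 2 - Q v)} = ∑ _ : V, 2 * Nat.card Aˣ := by
    nth_rw 2 [← (Finite.injective_iff_bijective.1 hf).sum_comp]
    rw [← Finset.sum_add_distrib]
    refine Finset.sum_congr rfl fun v _ => ?_
    rw [hQ, card_isUnit_sq_sub_add_card_isUnit_sq_sub h2 hd]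
  rw [card_setOf_prod fun v t => IsUnit (t ^ 2 - Q v)]
  rw [Finset.sum_const, Finset.card_univ, smul_eq_mul, ← Nat.card_eq_fintype_card] at hdouble
  lia

end Squares

section Matrices

lemma det_smul_one_add_of_trace_eq_zero {R : Type*} [CommRing R] {τ : Matrix (Fin 2) (Fin 2) R}
    (hτ : τ.trace = 0) (t : R) : (t • 1 + τ).det = t ^ 2 + τ.det := by
  rw [trace_fin_two] at hτ
  simp only [det_fin_two, Matrix.add_apply, Matrix.smul_apply, one_fin_two, of_apply, cons_val',
    cons_val_zero, cons_val_one, cons_val_fin_one, smul_eq_mul]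
  linear_combination t * hτ

open QuadraticAlgebra

variable {A : Type*} [CommRing A]

/-- The traceless `2 × 2` matrices over `A[√d]` whose determinant lies in `A`. Here and below
`A[√d]` is `QuadraticAlgebra A d 0`, whose elements `⟨a, b⟩` stand for `a + b√d`. -/
def tracelessMatrices (d : A) : Set (Matrix (Fin 2) (Fin 2) (QuadraticAlgebra A d 0)) :=
  {τ | τ.trace = 0 ∧ τ.det.im = 0}

-- The `√d`-coordinate of `det τ` is a hyperbolic form in the six coordinates of `τ`.
lemma card_tracelessMatrices (h2 : IsUnit (2 : A)) (d : A) :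
    Nat.card (tracelessMatrices d) = Nat.card (orthogonalPairs (Fin 3) A) := by
  obtain ⟨h, hh⟩ := h2.exists_right_inv
  let g : (Fin 3 → A) × (Fin 3 → A) → Matrix (Fin 2) (Fin 2) (QuadraticAlgebra A d 0) :=
    fun p => !![⟨h * p.1 0, p.2 0⟩, ⟨p.1 1, p.2 2⟩; ⟨p.1 2, p.2 1⟩, -⟨h * p.1 0, p.2 0⟩]
  let coords : Matrix (Fin 2) (Fin 2) (QuadraticAlgebra A d 0) → (Fin 3 → A) × (Fin 3 → A) :=
    fun τ => (![2 * (τ 0 0).re, (τ 0 1).re, (τ 1 0).re], ![(τ 0 0).im, (τ 1 0).im, (τ 0 1).im])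
  have hcoords_g (p) : coords (g p) = p := by
    ext i <;> fin_cases i <;> simp [coords, g, ← mul_assoc, hh]
  have hg_coords {τ} (hτ : τ.trace = 0) : g (coords τ) = τ := by
    have hτ' : -τ 0 0 = τ 1 1 := neg_eq_of_add_eq_zero_right (trace_fin_two τ ▸ hτ)
    have hhalf (a : A) : h * (2 * a) = a := by rw [← mul_assoc, mul_comm h, hh, one_mul]
    ext i j <;> fin_cases i <;> fin_cases j <;> simp [coords, g, hhalf, ← hτ']
  have htrace (p) : (g p).trace = 0 := (trace_fin_two _).trans (add_neg_cancel _)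
  have hdet (p) : (g p).det.im = -(p.1 ⬝ᵥ p.2) := by
    simp only [g, neg_mk, det_fin_two, of_apply, cons_val', cons_val_zero, cons_val_fin_one,
      cons_val_one, mk_mul_mk, mk_sub_mk, dotProduct, Fin.sum_univ_three]
    linear_combination -p.1 0 * p.2 0 * hh
  have himage : g '' orthogonalPairs (Fin 3) A = tracelessMatrices d := by
    refine Set.Subset.antisymm ?_ fun τ hτ => ⟨coords τ, ?_, hg_coords hτ.1⟩
    · rintro _ ⟨p, hp, rfl⟩
      exact ⟨htrace p, by rw [hdet, hp, neg_zero]⟩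
    · exact neg_eq_zero.1 (by rw [← hdet, hg_coords hτ.1, hτ.2])
  rw [← himage, Nat.card_image_of_injective (Function.LeftInverse.injective hcoords_g)]

lemma omega_smul_mem_tracelessMatrices {d : A}
    {τ : Matrix (Fin 2) (Fin 2) (QuadraticAlgebra A d 0)} (hτ : τ ∈ tracelessMatrices d) :
    (ω : QuadraticAlgebra A d 0) • τ ∈ tracelessMatrices d := by
  constructor
  · rw [trace_smul, hτ.1, smul_zero]
  · simp [sq, omega_mul_omega_eq_mk, hτ.2]

lemma re_det_omega_smul {d : A} (τ : Matrix (Fin 2) (Fin 2) (QuadraticAlgebra A d 0)) :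
    ((ω : QuadraticAlgebra A d 0) • τ).det.re = d * τ.det.re := by
  simp [sq, omega_mul_omega_eq_mk]

lemma omega_smul_injective {d : A} (hd : IsUnit d) :
    Function.Injective fun τ : Matrix (Fin 2) (Fin 2) (QuadraticAlgebra A d 0) =>
      (ω : QuadraticAlgebra A d 0) • τ := by
  have hω : IsUnit (ω : QuadraticAlgebra A d 0) := by
    refine isUnit_of_mul_isUnit_left (y := ω) ?_
    rw [omega_mul_omega_eq_mk]
    exact hd.map (algebraMap A _)
  exact fun τ τ' => hω.smul_left_cancel.1

/-- The matrix `t + τ` built from a traceless matrix `τ` and a scalar `t`. -/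
def addScalar {d : A} (p : tracelessMatrices d × A) :
    Matrix (Fin 2) (Fin 2) (QuadraticAlgebra A d 0) :=
  algebraMap A (QuadraticAlgebra A d 0) p.2 • 1 + p.1

lemma trace_addScalar {d : A} (p : tracelessMatrices d × A) :
    (addScalar p).trace = algebraMap A _ (2 * p.2) := by
  rw [addScalar, trace_add, p.1.2.1, trace_smul, Matrix.trace_one, Fintype.card_fin, map_mul,
    map_ofNat, add_zero, smul_eq_mul, mul_comm, Nat.cast_ofNat]

lemma det_addScalar {d : A} (p : tracelessMatrices d × A) :
    (addScalar p).det = algebraMap A _ (p.2 ^ 2) + p.1.1.det := by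
  rw [addScalar, det_smul_one_add_of_trace_eq_zero p.1.2.1, map_pow]

lemma addScalar_injective (h2 : IsUnit (2 : A)) (d : A) :
    Function.Injective (addScalar (d := d)) := by
  intro p p' h
  have ht : p.2 = p'.2 := h2.mul_left_cancel <| algebraMap_injective (a := d) (b := 0) <| by
    rw [← trace_addScalar, ← trace_addScalar, h]
  refine Prod.ext (Subtype.ext ?_) ht
  simpa [addScalar, ht] using h

lemma range_addScalar (h2 : IsUnit (2 : A)) (d : A) :
    Set.range (addScalar (d := d)) = {M | M.det.im = 0 ∧ M.trace.im = 0} := by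
  ext M
  constructor
  · rintro ⟨p, rfl⟩
    exact ⟨by rw [det_addScalar, im_add, algebraMap_im, p.1.2.2, add_zero],
      by rw [trace_addScalar, algebraMap_im]⟩
  · rintro ⟨hdet, htrace⟩
    obtain ⟨h, hh⟩ := h2.exists_right_inv
    let t := algebraMap A (QuadraticAlgebra A d 0) (h * M.trace.re)
    have ht : t * 2 = M.trace := by
      ext
      · rw [mul_comm, ← map_ofNat (algebraMap A (QuadraticAlgebra A d 0)), ← map_mul, ← mul_assoc,
          hh, one_mul, algebraMap_re]
      · simp [t, htrace]
    have hτ : (M - t • 1).trace = 0 := by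
      rw [trace_sub, trace_smul, Matrix.trace_one, Fintype.card_fin, smul_eq_mul, Nat.cast_ofNat,
        ht, sub_self]
    have hM : t • 1 + (M - t • 1) = M := add_sub_cancel _ _
    have hτ_im : (M - t • 1).det.im = 0 := by
      rw [← hM, det_smul_one_add_of_trace_eq_zero hτ] at hdet
      rwa [← map_pow, im_add, algebraMap_im, zero_add] at hdet
    exact ⟨(⟨M - t • 1, hτ, hτ_im⟩, _), hM⟩

theorem card_isUnit_re_det [IsLocalRing A] [Finite A] (h2 : IsUnit (2 : A)) {d : A}
    (hd : ¬ IsSquare (IsLocalRing.residue A d)) :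
    Nat.card {M : Matrix (Fin 2) (Fin 2) (QuadraticAlgebra A d 0) |
      (M.det.im = 0 ∧ IsUnit M.det.re) ∧ M.trace.im = 0} =
      Nat.card (tracelessMatrices d) * Nat.card Aˣ := by
  have : Finite (QuadraticAlgebra A d 0) := Module.finite_of_finite A
  have hd' : IsUnit d := (IsLocalRing.residue_ne_zero_iff_isUnit d).1 fun h => hd (h ▸ .zero)
  let f : tracelessMatrices d → tracelessMatrices d :=
    fun τ => ⟨(ω : QuadraticAlgebra A d 0) • τ, omega_smul_mem_tracelessMatrices τ.2⟩
  have hf : Function.Injective f := fun τ τ' h =>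
    Subtype.ext (omega_smul_injective hd' (congrArg Subtype.val h))
  have hpreimage : addScalar (d := d) ⁻¹' {M | IsUnit M.det.re} =
      {p | IsUnit (p.2 ^ 2 - -p.1.1.det.re)} := by
    ext p
    rw [Set.mem_preimage, Set.mem_ofPred_eq, det_addScalar, re_add, algebraMap_re,
      ← sub_neg_eq_add]
    rfl
  have himage : addScalar (d := d) '' {p | IsUnit (p.2 ^ 2 - -p.1.1.det.re)} =
      {M | (M.det.im = 0 ∧ IsUnit M.det.re) ∧ M.trace.im = 0} := by
    rw [← hpreimage, Set.image_preimage_eq_range_inter, range_addScalar h2]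
    exact Set.ext fun _ => and_right_comm
  rw [← himage, Nat.card_image_of_injective (addScalar_injective h2 d)]
  refine card_isUnit_sq_sub_apply h2 hd (fun τ : tracelessMatrices d => -τ.1.det.re) hf fun τ => ?_
  simp only [f, re_det_omega_smul, mul_neg]

end Matrices

section GeneralLinearGroup

/-- The invertible matrices over an `A`-algebra `R` whose determinant comes from `Aˣ` and whose
trace comes from `A`. The set `𝒜ᵗ_{ℓᵏ,I}` is the case `A = ℤ/ℓᵏℤ`, `R = R_k`, `n = Fin 2`. -/
def rationalDetTrace (n A R : Type*) [Fintype n] [DecidableEq n] [CommRing A] [CommRing R]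
    [Algebra A R] : Set (GL n R) :=
  {σ | (∃ u : Aˣ, (σ : Matrix n n R).det = algebraMap A R u) ∧
    ∃ z : A, (σ : Matrix n n R).trace = algebraMap A R z}

lemma card_rationalDetTrace_of_algEquiv {n A R S : Type*} [Fintype n] [DecidableEq n] [CommRing A]
    [CommRing R] [CommRing S] [Algebra A R] [Algebra A S] (e : R ≃ₐ[A] S) :
    Nat.card (rationalDetTrace n A R) =
      Nat.card {M : Matrix n n S | (∃ u : Aˣ, M.det = algebraMap A S u) ∧
        ∃ z : A, M.trace = algebraMap A S z} := by
  let F : GL n R → Matrix n n S := fun σ => e.mapMatrix σ.val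
  have hF : Function.Injective F := e.mapMatrix.injective.comp Units.val_injective
  have hdet (N : Matrix n n R) (a : A) :
      (e.mapMatrix N).det = algebraMap A S a ↔ N.det = algebraMap A R a := by
    rw [← e.commutes, ← AlgEquiv.map_det, e.injective.eq_iff]
  have htrace (N : Matrix n n R) (a : A) :
      (e.mapMatrix N).trace = algebraMap A S a ↔ N.trace = algebraMap A R a := by
    rw [← e.commutes, AlgEquiv.mapMatrix_apply, ← AddMonoidHom.map_trace, e.injective.eq_iff]
  rw [← Nat.card_image_of_injective hF]
  congr! 2
  ext M
  constructor
  · rintro ⟨σ, ⟨⟨u, hu⟩, z, hz⟩, rfl⟩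
    exact ⟨⟨u, (hdet _ _).2 hu⟩, z, (htrace _ _).2 hz⟩
  · rintro ⟨⟨u, hu⟩, z, hz⟩
    obtain ⟨N, rfl⟩ := e.mapMatrix.surjective M
    rw [hdet] at hu
    rw [htrace] at hz
    have hN : IsUnit N.det := hu ▸ u.isUnit.map (algebraMap A R)
    exact ⟨GeneralLinearGroup.mk'' N hN, ⟨⟨u, hu⟩, z, hz⟩, rfl⟩

open QuadraticAlgebra

variable {A : Type*} [CommRing A]

lemma eval₂_omega (d : A) :
    eval₂ (Algebra.ofId A (QuadraticAlgebra A d 0) : A →+* QuadraticAlgebra A d 0) ω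
      (X ^ 2 - C d) = 0 := by
  rw [eval₂_sub, eval₂_X_pow, eval₂_C, sq, omega_mul_omega_eq_mk, sub_eq_zero]
  rfl

lemma root_mul_root (d : A) :
    AdjoinRoot.root ((X : A[X]) ^ 2 - C d) * AdjoinRoot.root (X ^ 2 - C d) =
      d • 1 + (0 : A) • AdjoinRoot.root (X ^ 2 - C d) := by
  have hroot := AdjoinRoot.eval₂_root ((X : A[X]) ^ 2 - C d)
  rw [eval₂_sub, eval₂_X_pow, eval₂_C, sub_eq_zero] at hroot
  rw [← sq, hroot, zero_smul, add_zero, ← AdjoinRoot.algebraMap_eq, Algebra.algebraMap_eq_smul_one]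

/-- The isomorphism between `A[X]/(X² - d)` and `QuadraticAlgebra A d 0`, our two models
of `A[√d]`. -/
noncomputable def adjoinRootEquivQuadraticAlgebra (d : A) :
    AdjoinRoot ((X : A[X]) ^ 2 - C d) ≃ₐ[A] QuadraticAlgebra A d 0 :=
  AlgEquiv.ofAlgHom (AdjoinRoot.liftAlgHom _ (Algebra.ofId _ _) ω (eval₂_omega d))
    (QuadraticAlgebra.lift ⟨AdjoinRoot.root _, root_mul_root d⟩)
    (QuadraticAlgebra.algHom_ext (by simp)) (AdjoinRoot.algHom_ext (by simp))

lemma exists_units_eq_algebraMap_iff {d : A} {z : QuadraticAlgebra A d 0} :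
    (∃ u : Aˣ, z = algebraMap A _ u) ↔ z.im = 0 ∧ IsUnit z.re :=
  ⟨by rintro ⟨u, rfl⟩; exact ⟨rfl, u.isUnit⟩,
    fun ⟨him, u, hu⟩ => ⟨u, QuadraticAlgebra.ext hu.symm him⟩⟩

lemma exists_eq_algebraMap_iff {d : A} {z : QuadraticAlgebra A d 0} :
    (∃ a : A, z = algebraMap A _ a) ↔ z.im = 0 :=
  ⟨by rintro ⟨a, rfl⟩; rfl, fun him => ⟨z.re, QuadraticAlgebra.ext rfl him⟩⟩

theorem card_rationalDetTrace_eq_card_orthogonalPairs_mul [IsLocalRing A] [Finite A]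
    (h2 : IsUnit (2 : A)) {d : A} (hd : ¬ IsSquare (IsLocalRing.residue A d)) :
    Nat.card (rationalDetTrace (Fin 2) A (AdjoinRoot ((X : A[X]) ^ 2 - C d))) =
      Nat.card (orthogonalPairs (Fin 3) A) * Nat.card Aˣ := by
  rw [card_rationalDetTrace_of_algEquiv (adjoinRootEquivQuadraticAlgebra d),
    ← card_tracelessMatrices h2 d, ← card_isUnit_re_det h2 hd]
  simp only [exists_units_eq_algebraMap_iff, exists_eq_algebraMap_iff]

theorem card_rationalDetTrace [IsLocalRing A] [Finite A] [IsPrincipalIdealRing A]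
    (h2 : IsUnit (2 : A)) {d : A} (hd : ¬ IsSquare (IsLocalRing.residue A d)) {q : ℕ}
    (hq : Nat.card (IsLocalRing.ResidueField A) = q) :
    ((q : ℤ) + 1) * q ^ 2 *
        Nat.card (rationalDetTrace (Fin 2) A (AdjoinRoot ((X : A[X]) ^ 2 - C d))) =
      (q - 1) * ((q ^ 2 + q + 1) * Nat.card A ^ 6 - Nat.card A ^ 4) := by
  have := Finite.of_surjective _ (IsLocalRing.residue_surjective (R := A))
  have hq1 : 1 < q := hq ▸ Finite.one_lt_card
  have hpairs := card_orthogonalPairs (ι := Fin 3) (A := A)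
  have hunits : (Nat.card Aˣ * q : ℤ) = (q - 1) * Nat.card A := by
    have h := card_units_mul_card_residueField (A := A)
    rw [Nat.card_units, hq] at h
    zify [hq1.le] at h
    exact h
  rw [Fintype.card_fin, hq] at hpairs
  have hne : ((q : ℤ) - 1) * Nat.card A ≠ 0 :=
    mul_ne_zero (by lia) (Nat.cast_ne_zero.2 (Nat.card_pos (α := A)).ne')
  rw [card_rationalDetTrace_eq_card_orthogonalPairs_mul h2 hd]
  refine mul_left_cancel₀ hne ?_
  push_cast
  linear_combination Nat.card Aˣ * q * hpairs +
    ((q ^ 3 - 1) * Nat.card A ^ 6 - (q - 1) * Nat.card A ^ 4) * hunits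

theorem stmt_3_general [IsLocalRing A] [Finite A] [IsPrincipalIdealRing A]
    (h2 : IsUnit (2 : A)) {d : A} (hd : ¬ IsSquare (IsLocalRing.residue A d)) {q k : ℕ}
    (hq : Nat.card (IsLocalRing.ResidueField A) = q) (hk : Nat.card A = q ^ k) :
    (q + 1) * Nat.card (rationalDetTrace (Fin 2) A (AdjoinRoot ((X : A[X]) ^ 2 - C d))) =
      (q - 1) * q ^ (6 * k - 2) * (q ^ 2 + q + 1) - (q - 1) * q ^ (4 * k - 2) := by
  have := Finite.of_surjective _ (IsLocalRing.residue_surjective (R := A))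
  have hq1 : 1 < q := hq ▸ Finite.one_lt_card
  have hk0 : k ≠ 0 := by
    rintro rfl
    exact (Finite.one_lt_card (α := A)).ne' hk
  have hpow6 : (q : ℤ) ^ (6 * k - 2) * q ^ 2 = (q ^ k) ^ 6 := by
    rw [pow_sub_mul_pow _ (by lia), pow_mul']
  have hpow4 : (q : ℤ) ^ (4 * k - 2) * q ^ 2 = (q ^ k) ^ 4 := by
    rw [pow_sub_mul_pow _ (by lia), pow_mul']
  have hcard := card_rationalDetTrace h2 hd hq
  rw [hk, Nat.cast_pow, ← hpow6, ← hpow4] at hcard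
  refine Nat.eq_sub_of_add_eq ?_
  zify [hq1.le]
  refine mul_right_cancel₀ (pow_ne_zero 2 (by lia : (q : ℤ) ≠ 0)) ?_
  linear_combination hcard

end GeneralLinearGroup

section ZMod

variable {p k : ℕ} [Fact p.Prime]

lemma isLocalRing_zmod_prime_pow (hk : k ≠ 0) : IsLocalRing (ZMod (p ^ k)) := by
  have := Fact.mk (Nat.one_lt_pow hk (Fact.out : p.Prime).one_lt)
  exact .of_surjective' (PadicInt.toZModPow k) (ZMod.ringHom_surjective _)

instance isPrincipalIdealRing_zmod (n : ℕ) : IsPrincipalIdealRing (ZMod n) :=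
  .of_surjective (Int.castRingHom (ZMod n)) (ZMod.ringHom_surjective _)

lemma isUnit_two_zmod_prime_pow (hp : p ≠ 2) : IsUnit (2 : ZMod (p ^ k)) := by
  rw [← Nat.cast_ofNat, ZMod.isUnit_iff_coprime]
  exact ((Nat.coprime_primes Nat.prime_two Fact.out).2 hp.symm).pow_right k

lemma card_residueField_zmod_prime_pow [IsLocalRing (ZMod (p ^ k))] (hk : k ≠ 0) :
    Nat.card (IsLocalRing.ResidueField (ZMod (p ^ k))) = p :=
  (card_residueField_eq_of_surjective (ZMod.castHom (dvd_pow_self p hk) (ZMod p))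
    (ZMod.ringHom_surjective _)).trans (Nat.card_zmod p)

lemma isSquare_of_isSquare_residue [IsLocalRing (ZMod (p ^ k))] (hk : k ≠ 0) {D : ℤ}
    (hD : IsSquare (IsLocalRing.residue (ZMod (p ^ k)) D)) : IsSquare (D : ZMod p) := by
  let f := ZMod.castHom (dvd_pow_self p hk) (ZMod p)
  have := (ZMod.ringHom_surjective f).isLocalHom
  simpa only [IsLocalRing.ResidueField.lift_residue_apply, map_intCast] using
    hD.map (IsLocalRing.ResidueField.lift f)

end ZMod

/-- For an odd prime `ℓ`, `k ≥ 1` and `D` a quadratic nonresidue modulo `ℓ`,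
the set `𝒜ᵗ_{ℓᵏ,I}` of `σ ∈ GL₂(R_k)` whose determinant lies in the image of
`(ℤ/ℓᵏℤ)ˣ` and whose trace lies in the image of `ℤ/ℓᵏℤ` satisfies
`(ℓ+1) · #𝒜ᵗ_{ℓᵏ,I} = (ℓ−1)·ℓ^(6k−2)·(ℓ² + ℓ + 1) − (ℓ−1)·ℓ^(4k−2)`. -/
theorem stmt_3 (ℓ k : ℕ) (hℓ : ℓ.Prime) (hodd : ℓ ≠ 2) (hk : 1 ≤ k) (D : ℤ)
    (hD : ¬ IsSquare (D : ZMod ℓ)) :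
    (ℓ + 1) *
      Nat.card {σ : GL (Fin 2) (InertRing ℓ k D) |
        (∃ u : (ZMod (ℓ ^ k))ˣ,
          (σ : Matrix (Fin 2) (Fin 2) (InertRing ℓ k D)).det =
            algebraMap (ZMod (ℓ ^ k)) (InertRing ℓ k D) (u : ZMod (ℓ ^ k))) ∧
        ∃ z : ZMod (ℓ ^ k),
          (σ : Matrix (Fin 2) (Fin 2) (InertRing ℓ k D)).trace =
            algebraMap (ZMod (ℓ ^ k)) (InertRing ℓ k D) z} =
      (ℓ - 1) * ℓ ^ (6 * k - 2) * (ℓ ^ 2 + ℓ + 1) - (ℓ - 1) * ℓ ^ (4 * k - 2) := by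
  have := Fact.mk hℓ
  have hk0 : k ≠ 0 := Nat.one_le_iff_ne_zero.1 hk
  have := isLocalRing_zmod_prime_pow (p := ℓ) hk0
  exact stmt_3_general (isUnit_two_zmod_prime_pow hodd)
    (fun h => hD (isSquare_of_isSquare_residue hk0 h)) (card_residueField_zmod_prime_pow hk0)
    (Nat.card_zmod _)
end

section
/- Let ℓ be an odd prime and k a positive integer. Let 𝒜ᵗ_{ℓᵏ,S} = {(τ, τ') ∈ GL₂(ℤ/ℓᵏℤ)² | τ and τ' have the same characteristic polynomial}. Then #𝒜ᵗ_{ℓᵏ,S} = ((ℓ−1)/(ℓ+1))·ℓ^{6k−4}·(ℓ⁴ + ℓ³ − ℓ² − 2ℓ − ℓ^{−2k+2}), i.e. (ℓ+1)·#𝒜ᵗ_{ℓᵏ,S} = (ℓ−1)·ℓ^{6k−4}·(ℓ⁴ + ℓ³ − ℓ² − 2ℓ) − (ℓ−1)·ℓ^{4k−2}. -/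
open Matrix

/-!
Two `2 × 2` matrices with equal traces are given by `a ∈ R` and `x, y ∈ R³` in such a way that the
difference of their determinants is the hyperbolic form `x ⬝ᵥ y`. So one has to count the zeros of
this form with an invertible determinant, for a finite local principal ideal ring `R` with maximal
ideal `𝔪` and residue field `κ`. Fibre them over the zeros over `κ`. Where the reduction of `(x, y)`
is nonzero the quadric is smooth, and every zero over `κ` has `#𝔪 ^ 6` lifts. The remaining fibres,
over pairs of equal scalar matrices, are copies of `𝔪` times the set of zeros in `𝔪³ × 𝔪³`. Those
are counted by stratifying `x` along the chain of ideals `I ⊇ 𝔪I ⊇ 𝔪²I ⊇ ⋯`: if the entries of `x`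
generate `I`, then `y ↦ x ⬝ᵥ y` maps `𝔪³` onto `𝔪I`, whose index in `I ≠ 0` is `#κ`. Over `κ`
itself, one subtracts the pairs of singular matrices with equal traces from all zeros of the form.
-/

namespace EqualCharpoly

open IsLocalRing

section Counting

lemma card_subtype_prod {α β : Type*} [Fintype α] [Finite β] (P : α → β → Prop) :
    Nat.card {p : α × β // P p.1 p.2} = ∑ a, Nat.card {b // P a b} := by
  rw [Nat.card_congr (Equiv.subtypeProdEquivSigmaSubtype P), Nat.card_sigma]

lemma card_eq_sum_card_fiber {α β : Type*} [Finite α] [Fintype β] (f : α → β) :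
    Nat.card α = ∑ b, Nat.card {a // f a = b} := by
  rw [← Nat.card_sigma, Nat.card_congr (Equiv.sigmaFiberEquiv f)]

lemma card_fiber_mul_card_range {A B : Type*} [AddGroup A] [AddGroup B] (φ : A →+ B) {b : B}
    (hb : b ∈ φ.range) : Nat.card {a // φ a = b} * Nat.card φ.range = Nat.card A := by
  obtain ⟨a, rfl⟩ := hb
  have hfiber : Nat.card {c // φ c = φ a} = Nat.card φ.ker := Nat.card_congr (φ.fiberEquivKer a)
  rw [hfiber, ← AddSubgroup.index_ker, AddSubgroup.card_mul_index]

end Counting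

section DotProduct
variable {R ι : Type*} [CommRing R] [Fintype ι]

lemma card_ideal_pi (I : Ideal R) :
    Nat.card (Ideal.pi fun _ : ι ↦ I) = Nat.card I ^ Fintype.card ι := by
  rw [← Nat.card_eq_fintype_card, ← Nat.card_fun]
  exact Nat.card_congr (Equiv.subtypePiEquivPi (p := fun _ r ↦ r ∈ I))

lemma exists_dotProduct_eq_iff_mem_mul_span {I : Ideal R} {x : ι → R} {r : R} :
    (∃ y ∈ Ideal.pi fun _ : ι ↦ I, x ⬝ᵥ y = r) ↔ r ∈ I * Ideal.span (Set.range x) := by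
  rw [← smul_eq_mul, Ideal.span, Submodule.mem_ideal_smul_span_iff_exists_sum]
  refine Finsupp.equivFunOnFinite.symm.exists_congr fun y ↦ ?_
  simp [Ideal.mem_pi, Finsupp.sum_fintype, dotProduct, mul_comm]

lemma card_dotProduct_eq_mul_card (I : Ideal R) (x : ι → R) {r : R}
    (hr : r ∈ I * Ideal.span (Set.range x)) :
    Nat.card {y // y ∈ (Ideal.pi fun _ : ι ↦ I) ∧ x ⬝ᵥ y = r} *
      Nat.card ↥(I * Ideal.span (Set.range x)) = Nat.card I ^ Fintype.card ι := by
  let φ : (Ideal.pi fun _ : ι ↦ I) →+ R :=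
    AddMonoidHom.mk' (fun y ↦ x ⬝ᵥ y) fun y z ↦ dotProduct_add x y z
  have hrange (s : R) : s ∈ φ.range ↔ s ∈ I * Ideal.span (Set.range x) := by
    rw [← exists_dotProduct_eq_iff_mem_mul_span]
    simp [φ]
  have hcount := card_fiber_mul_card_range φ ((hrange r).2 hr)
  rw [card_ideal_pi, Nat.card_congr (Equiv.subtypeEquivRight hrange)] at hcount
  rw [← hcount]
  congr 1
  exact (Nat.card_congr (Equiv.subtypeSubtypeEquivSubtypeInter _ fun y ↦ x ⬝ᵥ y = r)).symm

variable (ι) in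
/-- The pairs of orthogonal vectors `(x, y)` with `x ∈ Iⁿ` and `y ∈ Jⁿ`, that is, the zeros in
`Iⁿ × Jⁿ` of the hyperbolic quadratic form `∑ xᵢ yᵢ`. -/
def orthogonalPairs (I J : Ideal R) : Set ((ι → R) × (ι → R)) :=
  {p | (p.1 ∈ Ideal.pi fun _ ↦ I) ∧ (p.2 ∈ Ideal.pi fun _ ↦ J) ∧ p.1 ⬝ᵥ p.2 = 0}

lemma card_orthogonalPairs_bot (J : Ideal R) :
    Nat.card (orthogonalPairs ι ⊥ J) = Nat.card J ^ Fintype.card ι := by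
  rw [← card_ideal_pi]
  refine Nat.card_congr ⟨fun p ↦ ⟨p.1.2, p.2.2.1⟩, fun y ↦ ⟨(0, y), by simp [orthogonalPairs]⟩,
    fun ⟨⟨x, y⟩, hx, _⟩ ↦ ?_, fun _ ↦ rfl⟩
  have hx : x = 0 := funext hx
  simp [hx]

open Classical in
lemma card_orthogonalPairs_eq_sum [Fintype R] (I J : Ideal R) :
    Nat.card (orthogonalPairs ι I J) =
      ∑ x : ι → R with x ∈ Ideal.pi fun _ ↦ I,
        Nat.card {y // y ∈ (Ideal.pi fun _ ↦ J) ∧ x ⬝ᵥ y = 0} := by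
  refine (card_subtype_prod fun x y : ι → R ↦ (x ∈ Ideal.pi fun _ ↦ I) ∧
    (y ∈ Ideal.pi fun _ ↦ J) ∧ x ⬝ᵥ y = 0).trans ?_
  rw [Finset.sum_filter]
  refine Finset.sum_congr rfl fun x _ ↦ ?_
  split_ifs with hx <;> simp [hx]

end DotProduct

section ChainRing
variable {R ι : Type*} [CommRing R] [IsLocalRing R]

lemma card_eq_card_residueField_mul_card_maximalIdeal :
    Nat.card R = Nat.card (ResidueField R) * Nat.card (maximalIdeal R) := by
  rw [Submodule.card_eq_card_quotient_mul_card (maximalIdeal R), mul_comm]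
  rfl

variable [IsPrincipalIdealRing R]

lemma span_range_eq_of_mem_pi {ι : Type*} {I : Ideal R} {x : ι → R} (hx : x ∈ Ideal.pi fun _ ↦ I)
    (hx' : x ∉ Ideal.pi fun _ ↦ maximalIdeal R * I) : Ideal.span (Set.range x) = I := by
  refine le_antisymm (Ideal.span_le.2 <| Set.range_subset_iff.2 hx) ?_
  obtain ⟨i, hi⟩ : ∃ i, x i ∉ maximalIdeal R * I := by simpa [Ideal.mem_pi] using hx'
  obtain ⟨g, rfl⟩ := IsPrincipalIdealRing.principal I
  obtain ⟨u, hu⟩ := Ideal.mem_span_singleton'.1 (hx i)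
  have hunit : IsUnit u := by
    by_contra hu'
    exact hi (hu ▸ Ideal.mul_mem_mul hu' (Ideal.mem_span_singleton_self g))
  refine (Ideal.span_singleton_le_iff_mem _).2 ?_
  rw [← Ideal.unit_mul_mem_iff_mem _ hunit, hu]
  exact Ideal.subset_span (Set.mem_range_self i)

variable [Finite R]

lemma card_eq_card_residueField_mul {I : Ideal R} (hI : I ≠ ⊥) :
    Nat.card I = Nat.card (ResidueField R) * Nat.card ↥(maximalIdeal R * I) := by
  obtain ⟨g, rfl⟩ := IsPrincipalIdealRing.principal I
  -- Multiplication by `g` has the same kernel on `R` and on `𝔪`, and images `I` and `𝔪I`.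
  let x : Unit → R := fun _ ↦ g
  have hx : Ideal.span (Set.range x) = R ∙ g := by simp [x, Ideal.span]
  have htop := card_dotProduct_eq_mul_card ⊤ x (zero_mem _)
  have hmax := card_dotProduct_eq_mul_card (maximalIdeal R) x (zero_mem _)
  have hann (y : Unit → R) (hy : x ⬝ᵥ y = 0) : y ∈ Ideal.pi fun _ ↦ maximalIdeal R := by
    refine fun _ ↦ (mem_maximalIdeal _).2 fun hunit ↦ hI ?_
    have hg : g = 0 := hunit.mul_left_eq_zero.1 (by simpa [x, dotProduct] using hy)
    simp [hg]
  have hann_eq : Nat.card {y // y ∈ (Ideal.pi fun _ ↦ ⊤) ∧ x ⬝ᵥ y = 0} =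
      Nat.card {y // y ∈ (Ideal.pi fun _ ↦ maximalIdeal R) ∧ x ⬝ᵥ y = 0} :=
    Nat.card_congr (Equiv.subtypeEquivRight fun y ↦ and_congr_left fun hy ↦
      iff_of_true (fun _ ↦ trivial) (hann y hy))
  have hpos : 0 < Nat.card {y // y ∈ (Ideal.pi fun _ ↦ maximalIdeal R) ∧ x ⬝ᵥ y = 0} :=
    have : Nonempty {y // y ∈ (Ideal.pi fun _ ↦ maximalIdeal R) ∧ x ⬝ᵥ y = 0} := ⟨0, by simp⟩
    Nat.card_pos
  have hR : Nat.card (⊤ : Ideal R) = Nat.card R := Nat.card_congr (Equiv.Set.univ R)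
  rw [hann_eq, hx, Ideal.top_mul, Fintype.card_unit, pow_one, hR] at htop
  rw [hx, Fintype.card_unit, pow_one] at hmax
  refine Nat.eq_of_mul_eq_mul_left hpos ?_
  rw [htop, mul_left_comm, hmax, card_eq_card_residueField_mul_card_maximalIdeal]

variable [Fintype ι]

variable (ι) in
lemma card_orthogonalPairs_sub (I J : Ideal R) :
    (Nat.card (orthogonalPairs ι I J) - Nat.card (orthogonalPairs ι (maximalIdeal R * I) J) : ℤ) *
        Nat.card ↥(J * I) =
      (Nat.card I ^ Fintype.card ι - Nat.card ↥(maximalIdeal R * I) ^ Fintype.card ι) *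
        Nat.card J ^ Fintype.card ι := by
  classical
  have := Fintype.ofFinite R
  let box (L : Ideal R) : Finset (ι → R) := {x | x ∈ Ideal.pi fun _ ↦ L}
  have hbox (L : Ideal R) : ((box L).card : ℤ) = Nat.card L ^ Fintype.card ι := by
    rw [← Nat.cast_pow, ← card_ideal_pi, ← Fintype.card_subtype, ← Nat.card_eq_fintype_card]
  have hsub : box (maximalIdeal R * I) ⊆ box I :=
    Finset.monotone_filter_right _ fun x _ hx i ↦ Ideal.mul_le_right (hx i)
  rw [card_orthogonalPairs_eq_sum, card_orthogonalPairs_eq_sum, Nat.cast_sum, Nat.cast_sum,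
    ← Finset.sum_sdiff hsub, add_sub_cancel_right, Finset.sum_mul, ← hbox, ← hbox,
    ← Nat.cast_sub (Finset.card_le_card hsub), ← Finset.card_sdiff_of_subset hsub,
    ← nsmul_eq_mul, ← Finset.sum_const]
  refine Finset.sum_congr rfl fun x hx ↦ ?_
  simp only [box, Finset.mem_sdiff, Finset.mem_filter_univ] at hx
  have hker := card_dotProduct_eq_mul_card J x (zero_mem _)
  rw [span_range_eq_of_mem_pi hx.1 hx.2] at hker
  exact_mod_cast hker

lemma card_orthogonalPairs_maximalIdeal {n q m : ℕ} (hq : Nat.card (ResidueField R) = q)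
    (hm : Nat.card (maximalIdeal R) = m) (hn : Fintype.card ι = n + 1) (I : Ideal R) :
    ((q : ℤ) ^ n - 1) * Nat.card (orthogonalPairs ι I (maximalIdeal R)) =
      m ^ (n + 1) * ((q ^ (n + 1) - 1) * Nat.card I ^ n - q ^ n * (q - 1)) := by
  subst hq hm
  induction I using WellFoundedLT.induction with
  | ind I ih =>
    obtain rfl | hI := eq_or_ne I ⊥
    · have hbot : Nat.card (⊥ : Ideal R) = 1 := Nat.card_unique
      rw [card_orthogonalPairs_bot, hn, hbot]
      push_cast
      ring
    · have hlt : maximalIdeal R * I < I := by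
        refine lt_of_le_of_ne Ideal.mul_le_right fun h ↦ hI ?_
        exact Submodule.eq_bot_of_le_smul_of_le_jacobson_bot (maximalIdeal R) I
          (IsNoetherian.noetherian I) h.ge (maximalIdeal_le_jacobson ⊥)
      have hstep := card_orthogonalPairs_sub ι I (maximalIdeal R)
      have hIcard : (Nat.card I : ℤ) = _ := congrArg Nat.cast (card_eq_card_residueField_mul hI)
      have hpos : (Nat.card ↥(maximalIdeal R * I) : ℤ) ≠ 0 := mod_cast Nat.card_pos.ne'
      push_cast at hIcard
      rw [hn, hIcard] at hstep
      rw [hIcard]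
      refine mul_right_cancel₀ hpos ?_
      linear_combination (Nat.card (ResidueField R) ^ n - 1) * hstep +
        Nat.card ↥(maximalIdeal R * I) * ih _ hlt

end ChainRing

section Lifting
variable {R ι : Type*} [CommRing R] [IsLocalRing R]

lemma card_residue_fiber (c : ResidueField R) :
    Nat.card {r // residue R r = c} = Nat.card (maximalIdeal R) := by
  obtain ⟨r, rfl⟩ := residue_surjective c
  refine (Nat.card_congr ((residue R).toAddMonoidHom.fiberEquivKer r)).trans ?_
  exact Nat.card_congr (Equiv.subtypeEquivRight fun s ↦ residue_eq_zero_iff s)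

lemma comp_residue_eq_zero_iff {x : ι → R} :
    residue R ∘ x = 0 ↔ x ∈ Ideal.pi fun _ ↦ maximalIdeal R := by
  simp [funext_iff, Ideal.mem_pi]

lemma span_range_eq_top {x : ι → R} (hx : residue R ∘ x ≠ 0) :
    Ideal.span (Set.range x) = ⊤ := by
  obtain ⟨i, hi⟩ := Function.ne_iff.1 hx
  exact Ideal.eq_top_of_isUnit_mem _ (Ideal.subset_span (Set.mem_range_self i))
    ((residue_ne_zero_iff_isUnit _).1 hi)

variable [Fintype ι]

lemma card_comp_residue_fiber (c : ι → ResidueField R) :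
    Nat.card {x // residue R ∘ x = c} = Nat.card (maximalIdeal R) ^ Fintype.card ι := by
  simp_rw [funext_iff, Function.comp_apply]
  rw [Nat.card_congr (Equiv.subtypePiEquivPi (p := fun i r ↦ residue R r = c i)), Nat.card_pi]
  simp [card_residue_fiber]

lemma residue_dotProduct (x y : ι → R) :
    residue R (x ⬝ᵥ y) = (residue R ∘ x) ⬝ᵥ (residue R ∘ y) :=
  RingHom.map_dotProduct _ _ _

/-- The orthogonal pairs of vectors over a local ring that lift a given pair of vectors over its
residue field. -/
def orthogonalLifts (c : (ι → ResidueField R) × (ι → ResidueField R)) :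
    Set ((ι → R) × (ι → R)) :=
  {p | residue R ∘ p.1 = c.1 ∧ residue R ∘ p.2 = c.2 ∧ p.1 ⬝ᵥ p.2 = 0}

lemma orthogonalLifts_zero :
    orthogonalLifts (R := R) 0 = orthogonalPairs ι (maximalIdeal R) (maximalIdeal R) := by
  ext p
  simp [orthogonalLifts, orthogonalPairs, comp_residue_eq_zero_iff]

lemma orthogonalLifts_eq_empty {c : (ι → ResidueField R) × (ι → ResidueField R)}
    (hc : c.1 ⬝ᵥ c.2 ≠ 0) : orthogonalLifts c = ∅ := by
  refine Set.eq_empty_of_forall_notMem fun p ⟨hx, hy, hxy⟩ ↦ hc ?_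
  rw [← hx, ← hy, ← residue_dotProduct, hxy, map_zero]

lemma card_orthogonal_lift_mul {x : ι → R} (hx : residue R ∘ x ≠ 0) {c : ι → ResidueField R}
    (hc : (residue R ∘ x) ⬝ᵥ c = 0) :
    Nat.card {y // residue R ∘ y = c ∧ x ⬝ᵥ y = 0} * Nat.card (maximalIdeal R) =
      Nat.card (maximalIdeal R) ^ Fintype.card ι := by
  obtain ⟨y₀, rfl⟩ := residue_surjective.comp_left c
  have hmem : -(x ⬝ᵥ y₀) ∈ maximalIdeal R * Ideal.span (Set.range x) := by
    rw [span_range_eq_top hx, Ideal.mul_top, neg_mem_iff, ← residue_eq_zero_iff,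
      residue_dotProduct, hc]
  have hcount := card_dotProduct_eq_mul_card _ x hmem
  rw [span_range_eq_top hx, Ideal.mul_top] at hcount
  rw [← hcount]
  congr 1
  refine Nat.card_congr ((Equiv.subRight y₀).subtypeEquiv fun y ↦ ?_)
  simp [← comp_residue_eq_zero_iff, funext_iff, sub_eq_zero, dotProduct_sub, sub_eq_neg_self]

lemma card_orthogonalLifts_swap (c : (ι → ResidueField R) × (ι → ResidueField R)) :
    Nat.card (orthogonalLifts c.swap) = Nat.card (orthogonalLifts c) :=
  Nat.card_congr ((Equiv.prodComm _ _).subtypeEquiv fun p ↦ by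
    simp [orthogonalLifts, dotProduct_comm, and_left_comm])

/-- The coordinatewise reduction of a scalar and two vectors over a local ring. -/
noncomputable def reduce (v : R × (ι → R) × (ι → R)) :
    ResidueField R × (ι → ResidueField R) × (ι → ResidueField R) :=
  (residue R v.1, residue R ∘ v.2.1, residue R ∘ v.2.2)

lemma card_reduce_fiber (c : ResidueField R × (ι → ResidueField R) × (ι → ResidueField R)) :
    Nat.card {v : R × (ι → R) × (ι → R) // reduce v = c ∧ v.2.1 ⬝ᵥ v.2.2 = 0} =
      Nat.card (maximalIdeal R) * Nat.card (orthogonalLifts c.2) := by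
  rw [← card_residue_fiber c.1, ← Nat.card_prod, ← Nat.card_congr Equiv.subtypeProdEquivProd]
  refine Nat.card_congr (Equiv.subtypeEquivRight fun v ↦ ?_)
  simp [reduce, orthogonalLifts, Prod.ext_iff, and_assoc]

variable [Finite R]

lemma card_orthogonalLifts_mul_of_fst_ne_zero {c : (ι → ResidueField R) × (ι → ResidueField R)}
    (hc : c.1 ≠ 0) (horth : c.1 ⬝ᵥ c.2 = 0) :
    Nat.card (orthogonalLifts c) * Nat.card (maximalIdeal R) =
      (Nat.card (maximalIdeal R) ^ Fintype.card ι) ^ 2 := by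
  classical
  have := Fintype.ofFinite R
  have hfiber (x : ι → R) :
      Nat.card {y // residue R ∘ x = c.1 ∧ residue R ∘ y = c.2 ∧ x ⬝ᵥ y = 0} *
          Nat.card (maximalIdeal R) =
        if residue R ∘ x = c.1 then Nat.card (maximalIdeal R) ^ Fintype.card ι else 0 := by
    split_ifs with hx
    · simp only [hx, true_and]
      exact card_orthogonal_lift_mul (hx ▸ hc) (hx ▸ horth)
    · simp [hx]
  calc
    _ = (∑ x : ι → R, Nat.card {y // residue R ∘ x = c.1 ∧ residue R ∘ y = c.2 ∧ x ⬝ᵥ y = 0}) *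
        Nat.card (maximalIdeal R) := congrArg (· * _) (card_subtype_prod fun x y : ι → R ↦
          residue R ∘ x = c.1 ∧ residue R ∘ y = c.2 ∧ x ⬝ᵥ y = 0)
    _ = Nat.card {x // residue R ∘ x = c.1} * Nat.card (maximalIdeal R) ^ Fintype.card ι := by
      rw [Finset.sum_mul, Finset.sum_congr rfl fun x _ ↦ hfiber x, ← Finset.sum_filter,
        Finset.sum_const, smul_eq_mul, ← Fintype.card_subtype, ← Nat.card_eq_fintype_card]
    _ = (Nat.card (maximalIdeal R) ^ Fintype.card ι) ^ 2 := by rw [card_comp_residue_fiber, sq]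

lemma card_orthogonalLifts_mul {c : (ι → ResidueField R) × (ι → ResidueField R)}
    (hc : c ≠ 0) (horth : c.1 ⬝ᵥ c.2 = 0) :
    Nat.card (orthogonalLifts c) * Nat.card (maximalIdeal R) =
      (Nat.card (maximalIdeal R) ^ Fintype.card ι) ^ 2 := by
  by_cases hfst : c.1 = 0
  · have hsnd : c.2 ≠ 0 := fun h ↦ hc (Prod.ext hfst h)
    rw [← card_orthogonalLifts_swap]
    exact card_orthogonalLifts_mul_of_fst_ne_zero hsnd (by rwa [dotProduct_comm] at horth)
  · exact card_orthogonalLifts_mul_of_fst_ne_zero hfst horth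

open Classical in
lemma card_maximalIdeal_mul_card_orthogonalLifts
    (c : (ι → ResidueField R) × (ι → ResidueField R)) :
    (Nat.card (maximalIdeal R) * Nat.card (orthogonalLifts c) : ℤ) =
      (if c.1 ⬝ᵥ c.2 = 0 then ((Nat.card (maximalIdeal R) ^ Fintype.card ι) ^ 2 : ℤ) else 0) +
        if c = 0 then
          (Nat.card (maximalIdeal R) *
              Nat.card (orthogonalPairs ι (maximalIdeal R) (maximalIdeal R)) -
            (Nat.card (maximalIdeal R) ^ Fintype.card ι) ^ 2 : ℤ)
        else 0 := by
  by_cases hc : c = 0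
  · simp [hc, orthogonalLifts_zero]
  · by_cases horth : c.1 ⬝ᵥ c.2 = 0
    · rw [if_pos horth, if_neg hc, add_zero, mul_comm]
      exact_mod_cast card_orthogonalLifts_mul hc horth
    · simp [hc, horth, orthogonalLifts_eq_empty horth]

open Classical in
lemma card_orthogonal_of_reduce_eq_sum [Fintype (ResidueField R)]
    (U : ResidueField R × (ι → ResidueField R) × (ι → ResidueField R) → Prop) :
    Nat.card {v : R × (ι → R) × (ι → R) // U (reduce v) ∧ v.2.1 ⬝ᵥ v.2.2 = 0} =
      ∑ c with U c, Nat.card (maximalIdeal R) * Nat.card (orthogonalLifts c.2) := by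
  rw [card_eq_sum_card_fiber fun v ↦ reduce v.1, Finset.sum_filter]
  refine Finset.sum_congr rfl fun c _ ↦ ?_
  rw [← card_reduce_fiber c, Nat.card_congr (Equiv.subtypeSubtypeEquivSubtypeInter
    (fun v ↦ U (reduce v) ∧ v.2.1 ⬝ᵥ v.2.2 = 0) fun v ↦ reduce v = c)]
  split_ifs with hU
  · refine Nat.card_congr (Equiv.subtypeEquivRight fun v ↦ ?_)
    refine ⟨fun h ↦ ⟨h.2, h.1.2⟩, fun h ↦ ⟨⟨h.1 ▸ hU, h.2⟩, h.1⟩⟩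
  · have : IsEmpty {v : R × (ι → R) × (ι → R) //
      (U (reduce v) ∧ v.2.1 ⬝ᵥ v.2.2 = 0) ∧ reduce v = c} := ⟨fun v ↦ hU (v.2.2 ▸ v.2.1.1)⟩
    exact Nat.card_of_isEmpty

lemma card_orthogonal_of_reduce
    (U : ResidueField R × (ι → ResidueField R) × (ι → ResidueField R) → Prop) :
    (Nat.card {v : R × (ι → R) × (ι → R) // U (reduce v) ∧ v.2.1 ⬝ᵥ v.2.2 = 0} : ℤ) =
      (Nat.card (maximalIdeal R) ^ Fintype.card ι) ^ 2 *
          (Nat.card {c // U c ∧ c.2.1 ⬝ᵥ c.2.2 = 0} - Nat.card {a // U (a, 0)}) +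
        Nat.card (maximalIdeal R) *
          Nat.card (orthogonalPairs ι (maximalIdeal R) (maximalIdeal R)) *
            Nat.card {a // U (a, 0)} := by
  classical
  have := Finite.of_surjective _ (residue_surjective (R := R))
  have := Fintype.ofFinite (ResidueField R)
  have hscalar : Nat.card {a // U (a, 0)} = Nat.card {c // U c ∧ c.2 = 0} :=
    Nat.card_congr ⟨fun a ↦ ⟨(a, 0), a.2, rfl⟩, fun ⟨(a, p), hU, hp⟩ ↦ ⟨a, by simpa [← hp]⟩,
      fun _ ↦ rfl, fun ⟨(a, p), _, hp⟩ ↦ Subtype.ext (Prod.ext rfl hp.symm)⟩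
  rw [card_orthogonal_of_reduce_eq_sum, hscalar]
  push_cast
  simp only [card_maximalIdeal_mul_card_orthogonalLifts, Finset.sum_add_distrib,
    ← Finset.sum_filter, Finset.filter_filter, Finset.sum_const, nsmul_eq_mul,
    Nat.card_eq_fintype_card, Fintype.card_subtype]
  ring

end Lifting

section Matrices
variable {R : Type*} [CommRing R]

lemma charpoly_eq_charpoly_iff [Nontrivial R] (M N : Matrix (Fin 2) (Fin 2) R) :
    M.charpoly = N.charpoly ↔ M.trace = N.trace ∧ M.det = N.det := by
  refine ⟨fun h ↦ ⟨?_, ?_⟩, fun ⟨htrace, hdet⟩ ↦ ?_⟩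
  · rw [trace_eq_neg_charpoly_coeff, h, ← trace_eq_neg_charpoly_coeff]
  · rw [det_eq_sign_charpoly_coeff, h, ← det_eq_sign_charpoly_coeff]
  · rw [charpoly_fin_two, charpoly_fin_two, htrace, hdet]

/-- The first matrix of the pair of `2 × 2` matrices with equal traces that has coordinates
`(a, x, y)`. The coordinates are chosen so that the determinants of the pair differ by `x ⬝ᵥ y`. -/
def leftMatrix (v : R × (Fin 3 → R) × (Fin 3 → R)) : Matrix (Fin 2) (Fin 2) R :=
  !![v.1 + v.2.1 0, v.2.1 1; -v.2.2 1, v.1 + v.2.2 0]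

/-- The second matrix of the pair of `2 × 2` matrices with equal traces that has coordinates
`(a, x, y)`, see `leftMatrix`. -/
def rightMatrix (v : R × (Fin 3 → R) × (Fin 3 → R)) : Matrix (Fin 2) (Fin 2) R :=
  !![v.1, v.2.1 2; v.2.2 2, v.1 + v.2.1 0 + v.2.2 0]

lemma trace_leftMatrix (v : R × (Fin 3 → R) × (Fin 3 → R)) :
    (leftMatrix v).trace = (rightMatrix v).trace := by
  simp only [leftMatrix, rightMatrix, trace_fin_two_of]
  ring

lemma det_leftMatrix (v : R × (Fin 3 → R) × (Fin 3 → R)) :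
    (leftMatrix v).det = (rightMatrix v).det + v.2.1 ⬝ᵥ v.2.2 := by
  simp only [leftMatrix, rightMatrix, det_fin_two_of, vec3_dotProduct]
  ring

/-- The pairs of `2 × 2` matrices with equal traces, parametrised by their coordinates. -/
def equalTraceEquiv : R × (Fin 3 → R) × (Fin 3 → R) ≃
    {p : Matrix (Fin 2) (Fin 2) R × Matrix (Fin 2) (Fin 2) R // p.1.trace = p.2.trace} where
  toFun v := ⟨(leftMatrix v, rightMatrix v), trace_leftMatrix v⟩
  invFun p := (p.1.2 0 0, ![p.1.1 0 0 - p.1.2 0 0, p.1.1 0 1, p.1.2 0 1],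
    ![p.1.1 1 1 - p.1.2 0 0, -p.1.1 1 0, p.1.2 1 0])
  left_inv v := by
    ext i
    · rfl
    all_goals fin_cases i <;> simp [leftMatrix, rightMatrix]
  right_inv := by
    rintro ⟨⟨M, N⟩, htrace⟩
    rw [trace_fin_two, trace_fin_two] at htrace
    have hlast : M 0 0 + (M 1 1 - N 0 0) = N 1 1 := by linear_combination htrace
    ext i j <;> fin_cases i <;> fin_cases j <;> simp [leftMatrix, rightMatrix, hlast]

lemma card_charpoly_eq_and_det [Nontrivial R] (P : R → Prop) :
    Nat.card {p : Matrix (Fin 2) (Fin 2) R × Matrix (Fin 2) (Fin 2) R //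
      p.1.charpoly = p.2.charpoly ∧ P p.2.det} =
    Nat.card {v : R × (Fin 3 → R) × (Fin 3 → R) //
      P (rightMatrix v).det ∧ v.2.1 ⬝ᵥ v.2.2 = 0} := by
  have hcoord : Nat.card {v : R × (Fin 3 → R) × (Fin 3 → R) //
        P (rightMatrix v).det ∧ v.2.1 ⬝ᵥ v.2.2 = 0} =
      Nat.card {p : {p : Matrix (Fin 2) (Fin 2) R × Matrix (Fin 2) (Fin 2) R //
        p.1.trace = p.2.trace} // P p.1.2.det ∧ p.1.1.det = p.1.2.det} :=
    Nat.card_congr (equalTraceEquiv.subtypeEquiv fun v ↦ by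
      simp [equalTraceEquiv, det_leftMatrix])
  rw [hcoord]
  refine Nat.card_congr (.trans (Equiv.subtypeEquivRight fun p ↦ ?_)
    (Equiv.subtypeSubtypeEquivSubtypeInter _
      fun p : Matrix (Fin 2) (Fin 2) R × Matrix (Fin 2) (Fin 2) R ↦
        P p.2.det ∧ p.1.det = p.2.det).symm)
  rw [charpoly_eq_charpoly_iff]
  tauto

lemma card_GL_charpoly_eq_card_coordinates [Nontrivial R] :
    Nat.card {p : GL (Fin 2) R × GL (Fin 2) R |
      (p.1 : Matrix (Fin 2) (Fin 2) R).charpoly = (p.2 : Matrix (Fin 2) (Fin 2) R).charpoly} =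
    Nat.card {v : R × (Fin 3 → R) × (Fin 3 → R) //
      IsUnit (rightMatrix v).det ∧ v.2.1 ⬝ᵥ v.2.2 = 0} := by
  rw [← card_charpoly_eq_and_det IsUnit]
  refine Nat.card_congr <| .ofBijective (fun p ↦ ⟨(p.1.1, p.1.2), p.2,
    (isUnit_iff_isUnit_det _).1 p.1.2.isUnit⟩) ⟨fun p p' h ↦ ?_, ?_⟩
  · simpa [Subtype.ext_iff, Prod.ext_iff, Units.ext_iff] using h
  · rintro ⟨⟨M, N⟩, hcharpoly, hN⟩
    have hM : IsUnit M.det := by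
      rwa [((charpoly_eq_charpoly_iff M N).1 hcharpoly).2]
    exact ⟨⟨(((isUnit_iff_isUnit_det M).2 hM).unit, ((isUnit_iff_isUnit_det N).2 hN).unit),
      hcharpoly⟩, rfl⟩

lemma isUnit_det_rightMatrix_iff [IsLocalRing R] (v : R × (Fin 3 → R) × (Fin 3 → R)) :
    IsUnit (rightMatrix v).det ↔ (rightMatrix (reduce v)).det ≠ 0 := by
  rw [← residue_ne_zero_iff_isUnit]
  simp [rightMatrix, reduce, det_fin_two_of]

lemma card_det_eq_trace_eq_sum [Fintype R] (d t : R) :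
    Nat.card {M : Matrix (Fin 2) (Fin 2) R // M.det = d ∧ M.trace = t} =
      ∑ a, Nat.card {p : R × R // p.1 * p.2 = a * (t - a) - d} := by
  rw [← card_subtype_prod fun (a : R) (p : R × R) ↦ p.1 * p.2 = a * (t - a) - d]
  refine Nat.card_congr ⟨fun M ↦ ⟨(M.1 0 0, M.1 0 1, M.1 1 0), ?_⟩,
    fun v ↦ ⟨!![v.1.1, v.1.2.1; v.1.2.2, t - v.1.1], ?_⟩, fun ⟨M, _, htrace⟩ ↦ ?_,
    fun v ↦ by simp⟩
  · obtain ⟨M, rfl, rfl⟩ := M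
    change M 0 1 * M 1 0 = M 0 0 * (M.trace - M 0 0) - M.det
    rw [trace_fin_two, det_fin_two]
    ring
  · rw [det_fin_two_of, v.2]
    simp
  · ext i j
    fin_cases i <;> fin_cases j <;> simp [← htrace, trace_fin_two]

lemma card_charpoly_eq_det_eq_sum [Nontrivial R] [Fintype R] (d : R) :
    Nat.card {p : Matrix (Fin 2) (Fin 2) R × Matrix (Fin 2) (Fin 2) R //
      p.1.charpoly = p.2.charpoly ∧ p.2.det = d} =
    ∑ t : R, Nat.card {M : Matrix (Fin 2) (Fin 2) R // M.det = d ∧ M.trace = t} ^ 2 := by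
  rw [card_eq_sum_card_fiber fun p ↦ p.1.2.trace]
  refine Finset.sum_congr rfl fun t _ ↦ ?_
  rw [sq, ← Nat.card_prod, ← Nat.card_congr Equiv.subtypeProdEquivProd]
  refine Nat.card_congr (.trans (Equiv.subtypeSubtypeEquivSubtypeInter _
    fun p : Matrix (Fin 2) (Fin 2) R × Matrix (Fin 2) (Fin 2) R ↦ p.2.trace = t)
    (Equiv.subtypeEquivRight fun p ↦ ?_))
  rw [charpoly_eq_charpoly_iff]
  grind

end Matrices

section FiniteField
variable {K : Type*} [Field K] [Finite K]

lemma card_orthogonal_of_card_eq_succ {ι : Type*} [Fintype ι] {n : ℕ}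
    (hn : Fintype.card ι = n + 1) :
    (Nat.card {p : (ι → K) × (ι → K) // p.1 ⬝ᵥ p.2 = 0} : ℤ) =
      Nat.card K ^ n * (Nat.card K ^ (n + 1) + Nat.card K - 1) := by
  have hstep := card_orthogonalPairs_sub ι (⊤ : Ideal K) ⊤
  have htop : Nat.card (⊤ : Ideal K) = Nat.card K := Nat.card_congr (Equiv.Set.univ K)
  have hpairs : Nat.card (orthogonalPairs ι (⊤ : Ideal K) ⊤) =
      Nat.card {p : (ι → K) × (ι → K) // p.1 ⬝ᵥ p.2 = 0} :=
    Nat.card_congr (Equiv.subtypeEquivRight fun p ↦ by simp [orthogonalPairs, Ideal.mem_pi])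
  rw [maximalIdeal_eq_bot, Ideal.bot_mul, card_orthogonalPairs_bot, Ideal.mul_top, htop, hn,
    hpairs] at hstep
  have hq : (Nat.card K : ℤ) ≠ 0 := mod_cast Nat.card_pos.ne'
  refine mul_right_cancel₀ hq ?_
  simp only [Nat.card_unique, Nat.cast_one, one_pow, Nat.cast_pow] at hstep
  linear_combination hstep

lemma card_ne_zero : (Nat.card {a : K // a ≠ 0} : ℤ) = Nat.card K - 1 := by
  rw [← Nat.card_congr unitsEquivNeZero, Nat.card_units, Nat.cast_sub Nat.card_pos, Nat.cast_one]

open Classical in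
lemma card_mul_eq (m : K) :
    (Nat.card {p : K × K // p.1 * p.2 = m} : ℤ) =
      Nat.card K - 1 + if m = 0 then (Nat.card K : ℤ) else 0 := by
  have := Fintype.ofFinite K
  have hone (b : K) (hb : b ≠ 0) : Nat.card {c // b * c = m} = 1 := by
    simp_rw [← eq_inv_mul_iff_mul_eq₀ hb]
    exact Nat.card_unique
  have hzero : Nat.card {c : K // 0 * c = m} = if m = 0 then Nat.card K else 0 := by
    split_ifs with hm <;> simp [hm, eq_comm (a := (0 : K))]
  rw [card_subtype_prod fun b c : K ↦ b * c = m, ← Finset.add_sum_erase _ _ (Finset.mem_univ 0),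
    hzero, Finset.sum_congr rfl fun b hb ↦ hone b (Finset.ne_of_mem_erase hb),
    Finset.sum_const, Finset.card_erase_of_mem (Finset.mem_univ 0), Finset.card_univ,
    ← Nat.card_eq_fintype_card, smul_eq_mul, mul_one, Nat.cast_add, Nat.cast_sub Nat.card_pos]
  push_cast
  ring

open Classical in
lemma card_det_eq_zero_trace_eq (t : K) :
    (Nat.card {M : Matrix (Fin 2) (Fin 2) K // M.det = 0 ∧ M.trace = t} : ℤ) =
      Nat.card K ^ 2 + if t = 0 then 0 else (Nat.card K : ℤ) := by
  have := Fintype.ofFinite K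
  have hroots : ((Finset.univ.filter fun a : K ↦ a * (t - a) = 0).card : ℤ) =
      if t = 0 then 1 else 2 := by
    have hpair : (Finset.univ.filter fun a : K ↦ a * (t - a) = 0) = {0, t} := by
      ext a
      simp [sub_eq_zero, eq_comm (a := t)]
    rw [hpair]
    split_ifs with ht
    · simp [ht]
    · rw [Finset.card_pair (Ne.symm ht), Nat.cast_two]
  rw [card_det_eq_trace_eq_sum, Nat.cast_sum]
  simp only [sub_zero, card_mul_eq, Finset.sum_add_distrib, ← Finset.sum_filter, Finset.sum_const,
    nsmul_eq_mul, hroots, Finset.card_univ, ← Nat.card_eq_fintype_card]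
  split_ifs <;> ring

lemma card_charpoly_eq_det_eq_zero :
    (Nat.card {p : Matrix (Fin 2) (Fin 2) K × Matrix (Fin 2) (Fin 2) K //
      p.1.charpoly = p.2.charpoly ∧ p.2.det = 0} : ℤ) =
    Nat.card K ^ 4 + (Nat.card K - 1) * (Nat.card K ^ 2 + Nat.card K) ^ 2 := by
  classical
  have := Fintype.ofFinite K
  rw [card_charpoly_eq_det_eq_sum, Nat.cast_sum,
    ← Finset.add_sum_erase _ _ (Finset.mem_univ 0)]
  simp only [Nat.cast_pow, card_det_eq_zero_trace_eq]
  rw [Finset.sum_congr rfl fun t ht ↦ by rw [if_neg (Finset.ne_of_mem_erase ht)],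
    Finset.sum_const, Finset.card_erase_of_mem (Finset.mem_univ 0), Finset.card_univ,
    ← Nat.card_eq_fintype_card, nsmul_eq_mul, Nat.cast_sub Nat.card_pos, if_pos trivial]
  push_cast
  ring

lemma card_det_rightMatrix_ne_zero :
    (Nat.card {v : K × (Fin 3 → K) × (Fin 3 → K) //
      (rightMatrix v).det ≠ 0 ∧ v.2.1 ⬝ᵥ v.2.2 = 0} : ℤ) =
    Nat.card K ^ 6 - Nat.card K ^ 5 - Nat.card K ^ 4 + Nat.card K ^ 2 := by
  classical
  have := Fintype.ofFinite K
  have htotal : Nat.card {v : K × (Fin 3 → K) × (Fin 3 → K) // v.2.1 ⬝ᵥ v.2.2 = 0} =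
      Nat.card K * Nat.card {p : (Fin 3 → K) × (Fin 3 → K) // p.1 ⬝ᵥ p.2 = 0} := by
    rw [card_subtype_prod fun (_ : K) (p : (Fin 3 → K) × (Fin 3 → K)) ↦ p.1 ⬝ᵥ p.2 = 0]
    simp
  have hsplit : Nat.card {v : K × (Fin 3 → K) × (Fin 3 → K) // v.2.1 ⬝ᵥ v.2.2 = 0} =
      Nat.card {v : K × (Fin 3 → K) × (Fin 3 → K) //
        (rightMatrix v).det = 0 ∧ v.2.1 ⬝ᵥ v.2.2 = 0} +
      Nat.card {v : K × (Fin 3 → K) × (Fin 3 → K) //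
        (rightMatrix v).det ≠ 0 ∧ v.2.1 ⬝ᵥ v.2.2 = 0} := by
    simp only [Nat.card_eq_fintype_card, Fintype.card_subtype]
    rw [← Finset.card_filter_add_card_filter_not fun v ↦ (rightMatrix v).det = 0,
      Finset.filter_filter, Finset.filter_filter]
    simp only [and_comm]
  rw [htotal, ← card_charpoly_eq_and_det (· = 0)] at hsplit
  have horth := card_orthogonal_of_card_eq_succ (K := K) (Fintype.card_fin 3)
  have hsing := card_charpoly_eq_det_eq_zero (K := K)
  zify at hsplit
  linear_combination -hsplit + Nat.card K * horth - hsing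

end FiniteField

section Count
variable {R : Type*} [CommRing R] [IsLocalRing R] [Finite R]

lemma card_maximalIdeal_of_card_eq_pow_succ {q k : ℕ} (hq : Nat.card (ResidueField R) = q)
    (hR : Nat.card R = q ^ (k + 1)) : Nat.card (maximalIdeal R) = q ^ k := by
  have := Finite.of_surjective _ (residue_surjective (R := R))
  have hpos : 0 < q := hq ▸ Nat.card_pos
  rw [card_eq_card_residueField_mul_card_maximalIdeal, hq, pow_succ'] at hR
  exact Nat.eq_of_mul_eq_mul_left hpos hR

variable [IsPrincipalIdealRing R]

lemma card_residueField_add_one_mul_card_GL_charpoly_eq {q m : ℕ}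
    (hq : Nat.card (ResidueField R) = q) (hm : Nat.card (maximalIdeal R) = m) :
    (q + 1 : ℤ) * Nat.card {p : GL (Fin 2) R × GL (Fin 2) R |
      (p.1 : Matrix (Fin 2) (Fin 2) R).charpoly = (p.2 : Matrix (Fin 2) (Fin 2) R).charpoly} =
    (q - 1) * (q ^ 2 * m ^ 6) * (q ^ 4 + q ^ 3 - q ^ 2 - 2 * q) - (q - 1) * (q ^ 2 * m ^ 4) := by
  have := Finite.of_surjective _ (residue_surjective (R := R))
  have hscalar : (Nat.card {a : ResidueField R // (rightMatrix (a, 0)).det ≠ 0} : ℤ) = q - 1 := by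
    rw [← hq, ← card_ne_zero]
    simp [rightMatrix, det_fin_two_of]
  have hlift := card_orthogonal_of_reduce (R := R) (ι := Fin 3) fun v ↦ (rightMatrix v).det ≠ 0
  rw [card_det_rightMatrix_ne_zero, hscalar, hq, hm, Fintype.card_fin] at hlift
  rw [card_GL_charpoly_eq_card_coordinates]
  simp only [isUnit_det_rightMatrix_iff, hlift]
  have hmax := card_orthogonalPairs_maximalIdeal hq hm (Fintype.card_fin 3) (maximalIdeal R)
  rw [hm] at hmax
  linear_combination m * hmax

end Count

section ZMod

instance (n : ℕ) : IsPrincipalIdealRing (ZMod n) :=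
  .of_surjective (Int.castRingHom _) (ZMod.ringHom_surjective _)

variable {ℓ k : ℕ} [Fact ℓ.Prime] [NeZero k]

instance : IsLocalRing (ZMod (ℓ ^ k)) :=
  have : Fact (1 < ℓ ^ k) := ⟨Nat.one_lt_pow (NeZero.ne k) (Fact.out : ℓ.Prime).one_lt⟩
  .of_surjective' (PadicInt.toZModPow (p := ℓ) k) (ZMod.ringHom_surjective _)

lemma card_residueField_zmod_prime_pow : Nat.card (ResidueField (ZMod (ℓ ^ k))) = ℓ := by
  have hdvd : ℓ ∣ ℓ ^ k := dvd_pow_self ℓ (NeZero.ne k)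
  have hsurj := ZMod.castHom_surjective hdvd
  rw [ResidueField, ← ker_eq_maximalIdeal (ZMod.castHom hdvd (ZMod ℓ)) hsurj,
    Nat.card_congr (RingHom.quotientKerEquivOfSurjective hsurj).toEquiv, Nat.card_zmod]

end ZMod

end EqualCharpoly

open EqualCharpoly IsLocalRing in
theorem stmt_5_general (R : Type*) [CommRing R] [IsLocalRing R] [IsPrincipalIdealRing R] [Finite R]
    (q k : ℕ) (hq : Nat.card (ResidueField R) = q) (hR : Nat.card R = q ^ k) :
    (q + 1) *
      Nat.card {p : GL (Fin 2) R × GL (Fin 2) R |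
        (p.1 : Matrix (Fin 2) (Fin 2) R).charpoly = (p.2 : Matrix (Fin 2) (Fin 2) R).charpoly} =
      (q - 1) * q ^ (6 * k - 4) * (q ^ 4 + q ^ 3 - q ^ 2 - 2 * q) -
        (q - 1) * q ^ (4 * k - 2) := by
  have := Finite.of_surjective _ (residue_surjective (R := R))
  have hq_one : 1 < q := hq ▸ Finite.one_lt_card
  obtain _ | k := k
  · exact absurd hR (Finite.one_lt_card (α := R)).ne'
  have hm : Nat.card (maximalIdeal R) = q ^ k := card_maximalIdeal_of_card_eq_pow_succ hq hR
  have hcount := card_residueField_add_one_mul_card_GL_charpoly_eq hq hm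
  have hexp_six : q ^ (6 * (k + 1) - 4) = q ^ 2 * (q ^ k) ^ 6 := by
    rw [← pow_mul, ← pow_add]
    congr 1
    lia
  have hexp_four : q ^ (4 * (k + 1) - 2) = q ^ 2 * (q ^ k) ^ 4 := by
    rw [← pow_mul, ← pow_add]
    congr 1
    lia
  have hsq : q ^ 2 ≤ q ^ 4 + q ^ 3 := by nlinarith [pow_pos (zero_lt_one.trans hq_one) 2]
  have hlin : 2 * q ≤ q ^ 4 + q ^ 3 - q ^ 2 :=
    Nat.le_sub_of_add_le (by nlinarith [pow_pos (zero_lt_one.trans hq_one) 2])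
  rw [hexp_six, hexp_four]
  refine eq_tsub_of_add_eq ?_
  zify [hq_one.le, hsq, hlin] at hcount ⊢
  linear_combination hcount

/-- For an odd prime `ℓ` and `k ≥ 1`, the set `𝒜ᵗ_{ℓᵏ,S}` of pairs
`(τ, τ') ∈ GL₂(ℤ/ℓᵏℤ)²` with equal characteristic polynomials satisfies
`(ℓ+1) · #𝒜ᵗ_{ℓᵏ,S} = (ℓ−1)·ℓ^(6k−4)·(ℓ⁴ + ℓ³ − ℓ² − 2ℓ) − (ℓ−1)·ℓ^(4k−2)`. -/
theorem stmt_5 (ℓ k : ℕ) (hℓ : ℓ.Prime) (hodd : ℓ ≠ 2) (hk : 1 ≤ k) :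
    (ℓ + 1) *
      Nat.card {p : GL (Fin 2) (ZMod (ℓ ^ k)) × GL (Fin 2) (ZMod (ℓ ^ k)) |
        Matrix.charpoly (p.1 : Matrix (Fin 2) (Fin 2) (ZMod (ℓ ^ k))) =
          Matrix.charpoly (p.2 : Matrix (Fin 2) (Fin 2) (ZMod (ℓ ^ k)))} =
      (ℓ - 1) * ℓ ^ (6 * k - 4) * (ℓ ^ 4 + ℓ ^ 3 - ℓ ^ 2 - 2 * ℓ) -
        (ℓ - 1) * ℓ ^ (4 * k - 2) := by
  have := Fact.mk hℓ
  have : NeZero k := ⟨by lia⟩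
  exact stmt_5_general _ ℓ k EqualCharpoly.card_residueField_zmod_prime_pow (Nat.card_zmod _)
end
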